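/- Let Ω be a finite set and Q a pmf on Ω with Q(a) > 0 for all a ∈ Ω. For a nonempty subset S ⊆ Ω define F(S) = −log₂|S| + (1/|S|)·Σ_{a∈S} ( −log₂ Q(a) ), which equals the I-divergence D(U_{|S|} ‖ Q) of the uniform distribution on S from Q. Then there exists a minimizer S* of F over all nonempty subsets of Ω that is a threshold set: for some t > 0, S* = { a ∈ Ω : Q(a) ≥ t }. -/

import Mathlib

/-- The uniform-codebook I-divergence
`F(S) = D(U_{|S|} ‖ Q) = −log₂|S| + (1/|S|)·∑_{a∈S}(−log₂ Q a)` of the uniform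
distribution on a nonempty codebook `S` from a pmf `Q`. -/
noncomputable def uniformCodebookDiv {Ω : Type*} [Fintype Ω] (Q : Ω → ℝ)
    (S : Finset Ω) : ℝ :=
  -Real.logb 2 (S.card : ℝ) + (1 / (S.card : ℝ)) * ∑ a ∈ S, (-Real.logb 2 (Q a))

/-!
In nats, `F(S)` is the mean over `S` of the cost `c = -log Q`, minus `log |S|`. If `S` is a
minimizer and `μ` is the mean cost over `S`, then adding a point `b` must not decrease `F`, which
forces `c b - μ ≥ (|S| + 1) (log (|S| + 1) - log |S|) > 1`, and removing a point `a` must not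
decrease `F`, which forces `c a - μ ≤ (|S| - 1) (log |S| - log (|S| - 1)) < 1`. So every point
outside a minimizer is strictly more expensive than every point inside it, even when `c` has ties.
-/

theorem mul_log_sub_log_lt_sub {x y : ℝ} (hx : 0 ≤ x) (hy : 0 < y) (hxy : x ≠ y) :
    x * (Real.log y - Real.log x) < y - x := by
  rcases hx.eq_or_lt with rfl | hx
  · simpa using hy
  · have hlog : Real.log (y / x) < y / x - 1 :=
      Real.log_lt_sub_one_of_pos (div_pos hy hx) (by rwa [Ne, div_eq_one_iff_eq hx.ne', eq_comm])
    calc x * (Real.log y - Real.log x)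
        = x * Real.log (y / x) := by rw [Real.log_div hy.ne' hx.ne']
      _ < x * (y / x - 1) := by gcongr
      _ = y - x := by field_simp

section CodeFreeEnergy

open Finset
open scoped BigOperators

variable {ι : Type*}

theorem card_add_one_mul_expect_insert {M : Type*} [Semiring M] [Module ℚ≥0 M] [DecidableEq ι]
    {S : Finset ι} {b : ι} (hb : b ∉ S) (c : ι → M) :
    (#S + 1) * 𝔼 a ∈ insert b S, c a = c b + #S * 𝔼 a ∈ S, c a := by
  rw [card_mul_expect, ← sum_insert hb, ← card_mul_expect, card_insert_of_notMem hb, Nat.cast_succ]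

/-- The free energy of a code `S` with costs `c`: its mean cost minus the entropy, in nats, of the
uniform distribution on it. With `c = -log Q` it is the divergence `D(U_{|S|} ‖ Q)` in nats. On the
empty code it takes the junk value `0`. -/
noncomputable def codeFreeEnergy (c : ι → ℝ) (S : Finset ι) : ℝ :=
  𝔼 a ∈ S, c a - Real.log #S

variable {c : ι → ℝ} {S : Finset ι} {a b : ι}

theorem one_lt_sub_expect_of_codeFreeEnergy_le_insert [DecidableEq ι] (hS : S.Nonempty)
    (hb : b ∉ S) (hle : codeFreeEnergy c S ≤ codeFreeEnergy c (insert b S)) :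
    1 < c b - 𝔼 i ∈ S, c i := by
  have hcard : (0 : ℝ) < #S := mod_cast hS.card_pos
  have hlog := mul_log_sub_log_lt_sub (by positivity : (0 : ℝ) ≤ #S + 1) hcard (by simp)
  have hmean := card_add_one_mul_expect_insert hb c
  rw [codeFreeEnergy, codeFreeEnergy, card_insert_of_notMem hb, Nat.cast_succ] at hle
  calc 1 < (#S + 1) * (Real.log (#S + 1) - Real.log #S) := by linarith
    _ ≤ (#S + 1) * (𝔼 i ∈ insert b S, c i - 𝔼 i ∈ S, c i) :=
      mul_le_mul_of_nonneg_left (by linarith) (by positivity)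
    _ = c b - 𝔼 i ∈ S, c i := by linear_combination hmean

theorem sub_expect_lt_one_of_codeFreeEnergy_le_erase [DecidableEq ι] (ha : a ∈ S)
    (hle : (S.erase a).Nonempty → codeFreeEnergy c S ≤ codeFreeEnergy c (S.erase a)) :
    c a - 𝔼 i ∈ S, c i < 1 := by
  obtain ⟨T, haT, rfl⟩ : ∃ T, a ∉ T ∧ insert a T = S :=
    ⟨S.erase a, notMem_erase a S, insert_erase ha⟩
  rw [erase_insert haT] at hle
  have hlog := mul_log_sub_log_lt_sub (Nat.cast_nonneg #T) (by positivity : (0 : ℝ) < #T + 1)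
    (by simp)
  have hmean := card_add_one_mul_expect_insert haT c
  have hstep : #T * (𝔼 i ∈ insert a T, c i - 𝔼 i ∈ T, c i) ≤
      #T * (Real.log (#T + 1) - Real.log #T) := by
    rcases T.eq_empty_or_nonempty with rfl | hT
    · simp
    · specialize hle hT
      rw [codeFreeEnergy, codeFreeEnergy, card_insert_of_notMem haT, Nat.cast_succ] at hle
      exact mul_le_mul_of_nonneg_left (by linarith) (by positivity)
  calc c a - 𝔼 i ∈ insert a T, c i
      = #T * (𝔼 i ∈ insert a T, c i - 𝔼 i ∈ T, c i) := by linear_combination -hmean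
    _ ≤ #T * (Real.log (#T + 1) - Real.log #T) := hstep
    _ < 1 := by linarith

theorem mem_of_isMinOn_codeFreeEnergy (hmin : IsMinOn (codeFreeEnergy c) {T | T.Nonempty} S)
    (ha : a ∈ S) (hba : c b ≤ c a) : b ∈ S := by
  classical
  by_contra hb
  have hb_gt : 1 < c b - 𝔼 i ∈ S, c i :=
    one_lt_sub_expect_of_codeFreeEnergy_le_insert ⟨a, ha⟩ hb (hmin (insert_nonempty b S))
  have ha_lt : c a - 𝔼 i ∈ S, c i < 1 :=
    sub_expect_lt_one_of_codeFreeEnergy_le_erase ha fun hne => hmin hne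
  linarith

theorem exists_mem_forall_mem_iff_le {β : Type*} [LinearOrder β] {f : ι → β} (hS : S.Nonempty)
    (hupper : ∀ a ∈ S, ∀ b, f a ≤ f b → b ∈ S) : ∃ a ∈ S, ∀ b, b ∈ S ↔ f a ≤ f b := by
  obtain ⟨a, ha, hle⟩ := S.exists_min_image f hS
  exact ⟨a, ha, fun b => ⟨hle b, hupper a ha b⟩⟩

end CodeFreeEnergy

theorem uniformCodebookDiv_eq_codeFreeEnergy_div {Ω : Type*} [Fintype Ω] (Q : Ω → ℝ)
    (S : Finset Ω) :
    uniformCodebookDiv Q S = codeFreeEnergy (fun a => -Real.log (Q a)) S / Real.log 2 := by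
  simp only [uniformCodebookDiv, codeFreeEnergy, Real.logb, Finset.expect_eq_sum_div_card,
    Finset.sum_neg_distrib, ← Finset.sum_div]
  ring

theorem isMinOn_codeFreeEnergy_of_uniformCodebookDiv {Ω : Type*} [Fintype Ω] {Q : Ω → ℝ}
    {𝒮 : Set (Finset Ω)} {S : Finset Ω} (hmin : IsMinOn (uniformCodebookDiv Q) 𝒮 S) :
    IsMinOn (codeFreeEnergy fun a => -Real.log (Q a)) 𝒮 S := by
  intro T hT
  have hle : uniformCodebookDiv Q S ≤ uniformCodebookDiv Q T := hmin hT
  rwa [uniformCodebookDiv_eq_codeFreeEnergy_div, uniformCodebookDiv_eq_codeFreeEnergy_div,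
    div_le_div_iff_of_pos_right (Real.log_pos one_lt_two)] at hle

theorem optimal_dm_code_is_threshold_set_general {Ω : Type*} [Fintype Ω] [Nonempty Ω]
    (Q : Ω → ℝ) (hQpos : ∀ a, 0 < Q a) :
    (∃ S : Finset Ω, S.Nonempty ∧ IsMinOn (uniformCodebookDiv Q) {T | T.Nonempty} S) ∧
      ∀ S : Finset Ω, S.Nonempty → IsMinOn (uniformCodebookDiv Q) {T | T.Nonempty} S →
        ∃ t, 0 < t ∧ ∀ a, a ∈ S ↔ t ≤ Q a := by
  refine ⟨Set.exists_min_image {T : Finset Ω | T.Nonempty} (uniformCodebookDiv Q)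
    (Set.toFinite _) ⟨Finset.univ, Finset.univ_nonempty⟩, fun S hS hmin => ?_⟩
  have hupper : ∀ a ∈ S, ∀ b, Q a ≤ Q b → b ∈ S := fun a ha b hab =>
    mem_of_isMinOn_codeFreeEnergy (isMinOn_codeFreeEnergy_of_uniformCodebookDiv hmin) ha
      (neg_le_neg (Real.log_le_log (hQpos a) hab))
  obtain ⟨a, -, hmem⟩ := exists_mem_forall_mem_iff_le hS hupper
  exact ⟨Q a, hQpos a, hmem⟩

/-- For a pmf `Q` with full support on a finite set `Ω`, there is a
minimizer `S*` of `F(S) = D(U_{|S|}‖Q)` over nonempty subsets of `Ω` that is a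
threshold set: `S* = {a : Q a ≥ t}` for some `t > 0`. -/
theorem optimal_dm_code_is_threshold_set {Ω : Type*} [Fintype Ω] [Nonempty Ω]
    (Q : Ω → ℝ) (hQpos : ∀ a, 0 < Q a) (hQ1 : ∑ a, Q a = 1) :
    ∃ (S : Finset Ω) (t : ℝ), S.Nonempty ∧ 0 < t ∧
      (∀ a, a ∈ S ↔ t ≤ Q a) ∧
      ∀ S' : Finset Ω, S'.Nonempty → uniformCodebookDiv Q S ≤ uniformCodebookDiv Q S' := by
  obtain ⟨⟨S, hS, hmin⟩, hthreshold⟩ := optimal_dm_code_is_threshold_set_general Q hQpos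
  obtain ⟨t, ht, hmem⟩ := hthreshold S hS hmin
  exact ⟨S, t, hS, ht, hmem, fun _ hS' => hmin hS'⟩
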